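/- Let d ≥ 1, 2 ≤ p < ∞, and k₁, k₂ ∈ ℝ. Then there exists a constant C > 0 such that ‖(1−Δ)^{k₂/2}(ℱf)‖_{L^p(ℝ^d)} ≤ C·‖(1−Δ)^{k₁/2} f‖_{L^p(ℝ^d)} for every Schwartz function f on ℝ^d, if and only if k₁ ≥ 0 and k₂ ≤ −2d(1/2 − 1/p). -/

import Mathlib

open MeasureTheory Complex Real
open scoped ENNReal RealInnerProductSpace

noncomputable section

abbrev E (d : ℕ) : Type := EuclideanSpace ℝ (Fin d)

/-- The Fourier transform `ℱu(ξ) = ∫ exp(-i x·ξ) u(x) dx`. -/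
def FT (d : ℕ) (u : E d → ℂ) (ξ : E d) : ℂ :=
  ∫ x, Complex.exp (-Complex.I * (⟪x, ξ⟫ : ℂ)) * u x

/-- The Bessel potential `(1-Δ)^{k/2} u = ℱ⁻¹((1+|ξ|²)^{k/2} ℱu)`. -/
def bessel (d : ℕ) (k : ℝ) (u : E d → ℂ) (x : E d) : ℂ :=
  (((2 * π) ^ d : ℝ) : ℂ)⁻¹ *
    ∫ ξ, Complex.exp (Complex.I * (⟪x, ξ⟫ : ℂ)) * (((1 + ‖ξ‖ ^ 2) ^ (k / 2) : ℝ) : ℂ) *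
      FT d u ξ

open scoped FourierTransform SchwartzMap ContDiff

section Plancherel

variable {V : Type*} [NormedAddCommGroup V] [InnerProductSpace ℝ V] [FiniteDimensional ℝ V]
  [MeasurableSpace V] [BorelSpace V]

theorem integral_fourier_mul_eq {u v : V → ℂ} (hu : Integrable u) (hv : Integrable v) :
    ∫ ξ, 𝓕 u ξ * v ξ = ∫ x, u x * 𝓕 v x := by
  have h := VectorFourier.integral_fourierIntegral_smul_eq_flip (L := innerₗ V)
    Real.continuous_fourierChar continuous_inner hu hv
  simpa [flip_innerₗ, smul_eq_mul] using! h

theorem continuous_fourier {u : V → ℂ} (hu : Integrable u) : Continuous (𝓕 u) :=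
  VectorFourier.fourierIntegral_continuous Real.continuous_fourierChar
    (by exact continuous_inner) hu

theorem norm_fourier_le_integral_norm (u : V → ℂ) (ξ : V) : ‖𝓕 u ξ‖ ≤ ∫ x, ‖u x‖ :=
  VectorFourier.norm_fourierIntegral_le_integral_norm _ _ _ u ξ

/-- Plancherel's theorem for the integral Fourier transform on `L¹ ∩ L²`. -/
theorem eLpNorm_fourier_two {u : V → ℂ} (h1 : MemLp u 1 volume) (h2 : MemLp u 2 volume) :
    eLpNorm (𝓕 u) 2 = eLpNorm u 2 := by
  have hu : Integrable u := memLp_one_iff_integrable.1 h1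
  have key : ∀ᵐ x, 𝓕 u x = (𝓕 (h2.toLp u) : Lp ℂ 2 (volume : Measure V)) x := by
    apply ae_eq_of_integral_contDiff_smul_eq
    · exact (continuous_fourier hu).locallyIntegrable
    · exact (Lp.memLp _).locallyIntegrable (by norm_num)
    intro g hg hgs
    let φ : 𝓢(V, ℂ) := (hgs.comp_left (g := ((↑) : ℝ → ℂ)) (by simp)).toSchwartzMap
      (Complex.ofRealCLM.contDiff.comp hg)
    have hφ : ∀ x, φ x = (g x : ℂ) := fun x ↦ rfl
    have h := congrArg (fun T ↦ T φ) (Lp.fourier_toTemperedDistribution_eq (h2.toLp u))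
    simp only [TemperedDistribution.fourier_apply, Lp.toTemperedDistribution_apply] at h
    calc ∫ x, g x • 𝓕 u x = ∫ x, 𝓕 u x * φ x := by simp [hφ, mul_comm]
      _ = ∫ x, u x * 𝓕 (φ : V → ℂ) x := integral_fourier_mul_eq hu φ.integrable
      _ = ∫ x, (𝓕 φ) x • (h2.toLp u) x := by
        apply integral_congr_ae
        filter_upwards [h2.coeFn_toLp] with x hx
        rw [hx, SchwartzMap.fourier_coe, smul_eq_mul, mul_comm]
      _ = _ := by rw [h]; simp [hφ]
  have hto : eLpNorm (h2.toLp u) 2 = eLpNorm u 2 := eLpNorm_congr_ae h2.coeFn_toLp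
  rw [eLpNorm_congr_ae key, ← hto]
  have := Lp.norm_fourier_eq (h2.toLp u)
  rw [Lp.norm_def, Lp.norm_def] at this
  exact (ENNReal.toReal_eq_toReal_iff' (Lp.eLpNorm_ne_top _) (Lp.eLpNorm_ne_top _)).1 this

end Plancherel

section WeakType

theorem lintegral_Ioo_rpow {s r : ℝ} (hs : -1 < s) (hr : 0 ≤ r) :
    ∫⁻ t in Set.Ioo 0 r, ENNReal.ofReal (t ^ s) = ENNReal.ofReal (r ^ (s + 1) / (s + 1)) := by
  have hi : IntegrableOn (fun t : ℝ ↦ t ^ s) (Set.Ioc 0 r) :=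
    (intervalIntegrable_iff_integrableOn_Ioc_of_le hr).1 (intervalIntegral.intervalIntegrable_rpow' hs)
  rw [IntegrableOn, ← restrict_Ioo_eq_restrict_Ioc] at hi
  rw [← ofReal_integral_eq_lintegral_ofReal hi, restrict_Ioo_eq_restrict_Ioc,
    ← intervalIntegral.integral_of_le hr, integral_rpow (Or.inl hs),
    Real.zero_rpow (by linarith), sub_zero]
  filter_upwards [ae_restrict_mem measurableSet_Ioo] with t ht
  exact Real.rpow_nonneg ht.1.le _

theorem lintegral_Ici_rpow {s r : ℝ} (hs : s < -1) (hr : 0 < r) :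
    ∫⁻ t in Set.Ici r, ENNReal.ofReal (t ^ s) = ENNReal.ofReal (-r ^ (s + 1) / (s + 1)) := by
  rw [← restrict_Ioi_eq_restrict_Ici,
    ← ofReal_integral_eq_lintegral_ofReal (integrableOn_Ioi_rpow_of_lt hs hr),
    integral_Ioi_rpow_of_lt hs hr]
  filter_upwards [ae_restrict_mem measurableSet_Ioi] with t ht
  exact Real.rpow_nonneg (hr.trans ht).le _

variable {V : Type*} [NormedAddCommGroup V] [InnerProductSpace ℝ V]

/-- The weight `(1 + ‖x‖²)^(-d/2)`, which lies in weak `L¹(ℝᵈ)`. -/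
def bracketWeight (x : V) : ℝ := (1 + ‖x‖ ^ 2) ^ (-(Module.finrank ℝ V : ℝ) / 2)

theorem bracketWeight_pos (x : V) : 0 < bracketWeight x := by
  unfold bracketWeight; positivity

theorem continuous_bracketWeight : Continuous (bracketWeight : V → ℝ) := by
  unfold bracketWeight
  exact Continuous.rpow_const (by fun_prop) fun x ↦ Or.inl (by positivity)

variable [FiniteDimensional ℝ V] [MeasurableSpace V] [BorelSpace V]

theorem lintegral_bracketWeight_sq_lt (hV : 0 < Module.finrank ℝ V) :
    ∃ K : ℝ≥0∞, K ≠ ⊤ ∧ ∀ s : ℝ, 0 ≤ s →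
      ∫⁻ x in {x : V | bracketWeight x < s}, ENNReal.ofReal (bracketWeight x ^ 2) ≤
        K * ENNReal.ofReal s := by
  set n := Module.finrank ℝ V with hn
  have hn' : (0 : ℝ) < n := by exact_mod_cast hV
  have hsq : ∀ x : V, bracketWeight x ^ 2 = (1 + ‖x‖ ^ 2) ^ (-(2 * n : ℝ) / 2) := fun x ↦ by
    rw [bracketWeight, ← Real.rpow_natCast, ← Real.rpow_mul (by positivity)]
    congr 1; push_cast; ring
  have hint : Integrable (fun x : V ↦ (1 + ‖x‖ ^ 2) ^ (-(2 * n : ℝ) / 2)) :=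
    integrable_rpow_neg_one_add_norm_sq (by rw [← hn]; linarith)
  set I : ℝ≥0∞ := ∫⁻ x : V, ENNReal.ofReal ((1 + ‖x‖ ^ 2) ^ (-(2 * n : ℝ) / 2)) with hI
  have hIt : I ≠ ⊤ := hint.lintegral_lt_top.ne
  refine ⟨ENNReal.ofReal (2 ^ (n : ℝ)) * I, ENNReal.mul_ne_top (by simp) hIt, fun s hs ↦ ?_⟩
  rcases hs.eq_or_lt with rfl | hs
  · have : {x : V | bracketWeight x < 0} = ∅ := by
      ext x; simpa using (bracketWeight_pos x).le
    simp [this]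
  have hmeas : MeasurableSet {x : V | bracketWeight x < s} :=
    (isOpen_lt continuous_bracketWeight continuous_const).measurableSet
  simp_rw [hsq]
  rcases le_or_gt 1 s with h1 | h1
  · calc _ ≤ I := setLIntegral_le_lintegral _ _
      _ = 1 * I * 1 := by simp
      _ ≤ _ := by
        gcongr
        · rw [← ENNReal.ofReal_one]
          exact ENNReal.ofReal_le_ofReal (Real.one_le_rpow (by norm_num) hn'.le)
        · rw [← ENNReal.ofReal_one]; exact ENNReal.ofReal_le_ofReal h1
  set R : ℝ := s ^ (-1 / n : ℝ) with hR
  have hR0 : 0 < R := by positivity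
  have hRn : R ^ (n : ℝ) = s⁻¹ := by
    rw [hR, ← Real.rpow_mul hs.le, div_mul_cancel₀ _ hn'.ne', Real.rpow_neg_one]
  have hbound : ∀ x ∈ {x : V | bracketWeight x < s},
      ENNReal.ofReal ((1 + ‖x‖ ^ 2) ^ (-(2 * n : ℝ) / 2)) ≤
        ENNReal.ofReal (2 ^ (n : ℝ) * s ^ 2) *
          ENNReal.ofReal ((1 + ‖R⁻¹ • x‖ ^ 2) ^ (-(2 * n : ℝ) / 2)) := by
    intro x hx
    rw [← ENNReal.ofReal_mul (by positivity)]
    apply ENNReal.ofReal_le_ofReal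
    have hx' : R ^ 2 ≤ 1 + ‖x‖ ^ 2 := by
      by_contra! h
      refine absurd (show bracketWeight x < s from hx) (not_lt.2 ?_)
      calc s = (R ^ 2) ^ (-(n : ℝ) / 2) := by
            rw [← Real.rpow_natCast, ← Real.rpow_mul hR0.le,
              show ((2 : ℕ) : ℝ) * (-(n : ℝ) / 2) = -n by push_cast; ring,
              Real.rpow_neg hR0.le, hRn, inv_inv]
        _ ≤ bracketWeight x := Real.rpow_le_rpow_of_nonpos (by positivity) h.le (by linarith)
    have hle : R ^ 2 / 2 * (1 + ‖R⁻¹ • x‖ ^ 2) ≤ 1 + ‖x‖ ^ 2 := by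
      rw [norm_smul, mul_pow, norm_inv, Real.norm_of_nonneg hR0.le]
      field_simp
      linarith
    calc (1 + ‖x‖ ^ 2) ^ (-(2 * n : ℝ) / 2)
        ≤ (R ^ 2 / 2 * (1 + ‖R⁻¹ • x‖ ^ 2)) ^ (-(2 * n : ℝ) / 2) :=
          Real.rpow_le_rpow_of_nonpos (by positivity) hle (by linarith)
      _ = (R ^ 2 / 2) ^ (-(2 * n : ℝ) / 2) * (1 + ‖R⁻¹ • x‖ ^ 2) ^ (-(2 * n : ℝ) / 2) :=
          Real.mul_rpow (by positivity) (by positivity)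
      _ = _ := by
        congr 1
        rw [show -(2 * n : ℝ) / 2 = -n by ring, Real.div_rpow (by positivity) (by norm_num),
          ← Real.rpow_natCast_mul hR0.le, mul_comm, Real.rpow_mul_natCast hR0.le,
          Real.rpow_neg hR0.le, hRn, inv_inv, Real.rpow_neg (by norm_num), div_inv_eq_mul, mul_comm]
  calc _ ≤ ∫⁻ x in {x : V | bracketWeight x < s}, ENNReal.ofReal (2 ^ (n : ℝ) * s ^ 2) *
          ENNReal.ofReal ((1 + ‖R⁻¹ • x‖ ^ 2) ^ (-(2 * n : ℝ) / 2)) :=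
        setLIntegral_mono' hmeas hbound
    _ ≤ ∫⁻ x : V, ENNReal.ofReal (2 ^ (n : ℝ) * s ^ 2) *
          ENNReal.ofReal ((1 + ‖R⁻¹ • x‖ ^ 2) ^ (-(2 * n : ℝ) / 2)) :=
        setLIntegral_le_lintegral _ _
    _ = ENNReal.ofReal (2 ^ (n : ℝ) * s ^ 2) * (ENNReal.ofReal (R ^ (n : ℝ)) * I) := by
        rw [lintegral_const_mul' _ _ ENNReal.ofReal_ne_top]
        congr 1
        have hnn : ∀ x : V, 0 ≤ (1 + ‖x‖ ^ 2) ^ (-(2 * n : ℝ) / 2) := fun x ↦ by positivity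
        rw [hI, ← ofReal_integral_eq_lintegral_ofReal (hint.comp_smul (inv_ne_zero hR0.ne'))
          (ae_of_all _ fun x ↦ hnn _), ← ofReal_integral_eq_lintegral_ofReal hint (ae_of_all _ hnn),
          ← ENNReal.ofReal_mul (by positivity), Measure.integral_comp_smul volume
            (fun x : V ↦ (1 + ‖x‖ ^ 2) ^ (-(2 * n : ℝ) / 2)), ← hn, smul_eq_mul,
          inv_pow, inv_inv, abs_of_pos (by positivity), Real.rpow_natCast]
    _ = _ := by
        rw [hRn, ← mul_assoc, ← ENNReal.ofReal_mul (by positivity), mul_right_comm _ I,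
          ← ENNReal.ofReal_mul (by positivity)]
        congr 2
        field_simp

end WeakType

section HardyLittlewoodPaley

variable {V : Type*} [NormedAddCommGroup V] [InnerProductSpace ℝ V] [FiniteDimensional ℝ V]
  [MeasurableSpace V] [BorelSpace V]

theorem lintegral_norm_fourier_sq {u : V → ℂ} (h1 : Integrable u) (h2 : MemLp u 2 volume) :
    ∫⁻ ξ, ENNReal.ofReal (‖𝓕 u ξ‖ ^ 2) = ∫⁻ x, ENNReal.ofReal (‖u x‖ ^ 2) := by
  have h := eLpNorm_fourier_two (memLp_one_iff_integrable.2 h1) h2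
  have e : ∀ v : V → ℂ, ∫⁻ x, ENNReal.ofReal (‖v x‖ ^ 2) = eLpNorm v 2 volume ^ 2 := fun v ↦ by
    rw [eLpNorm_eq_lintegral_rpow_enorm_toReal (by norm_num) (by norm_num), ← ENNReal.rpow_natCast,
      ← ENNReal.rpow_mul]
    simp [ENNReal.ofReal_pow]
  rw [e, e, h]

/-- A decomposition `u = a + b` bounds the distribution function of `‖𝓕 u‖ / bracketWeight`. -/
theorem lintegral_lt_norm_fourier_div_le {K : ℝ≥0∞}
    (hK : ∀ s : ℝ, 0 ≤ s →
      ∫⁻ x in {x : V | bracketWeight x < s}, ENNReal.ofReal (bracketWeight x ^ 2) ≤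
        K * ENNReal.ofReal s)
    {a b : V → ℂ} (ha : Integrable a) (hb : Integrable b) (hb2 : MemLp b 2 volume) {t : ℝ}
    (ht : 0 < t) :
    ∫⁻ ξ in {ξ : V | t < ‖𝓕 (a + b) ξ‖ / bracketWeight ξ}, ENNReal.ofReal (bracketWeight ξ ^ 2) ≤
      K * ENNReal.ofReal (2 * t⁻¹) * (∫⁻ x, ENNReal.ofReal ‖a x‖) +
        ENNReal.ofReal (4 * (t ^ 2)⁻¹) * ∫⁻ x, ENNReal.ofReal (‖b x‖ ^ 2) := by
  have hsub : {ξ : V | t < ‖𝓕 (a + b) ξ‖ / bracketWeight ξ} ⊆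
      {ξ | bracketWeight ξ < 2 * t⁻¹ * ∫ x, ‖a x‖} ∪
        {ξ | t / 2 * bracketWeight ξ ≤ ‖𝓕 b ξ‖} := by
    intro ξ hξ
    have hadd : 𝓕 (a + b) ξ = 𝓕 a ξ + 𝓕 b ξ :=
      congrFun (VectorFourier.fourierIntegral_add (L := innerₗ V)
        Real.continuous_fourierChar continuous_inner ha hb) ξ
    have hξ' : t * bracketWeight ξ < ‖𝓕 (a + b) ξ‖ := (lt_div_iff₀ (bracketWeight_pos ξ)).1 hξ
    rw [hadd] at hξ'
    by_contra! h
    simp only [Set.mem_union, Set.mem_ofPred_eq, not_or, not_lt, not_le] at h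
    have h1 := norm_add_le (𝓕 a ξ) (𝓕 b ξ)
    have h2 := norm_fourier_le_integral_norm a ξ
    have h3 : 2 * (∫ x, ‖a x‖) ≤ t * bracketWeight ξ := by
      have := mul_le_mul_of_nonneg_left h.1 ht.le
      field_simp at this
      linarith
    linarith [h.2]
  have hmeas : MeasurableSet {ξ : V | t / 2 * bracketWeight ξ ≤ ‖𝓕 b ξ‖} :=
    (isClosed_le (continuous_const.mul continuous_bracketWeight)
      (continuous_fourier hb).norm).measurableSet
  refine (lintegral_mono_set hsub).trans ((lintegral_union_le _ _ _).trans (add_le_add ?_ ?_))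
  · refine (hK _ (by positivity)).trans_eq ?_
    rw [ENNReal.ofReal_mul (by positivity),
      ofReal_integral_eq_lintegral_ofReal ha.norm (ae_of_all _ fun _ ↦ norm_nonneg _), mul_assoc]
  · rw [← lintegral_norm_fourier_sq hb hb2, ← lintegral_const_mul' _ _ ENNReal.ofReal_ne_top]
    refine (setLIntegral_mono' hmeas fun ξ hξ ↦ ?_).trans (setLIntegral_le_lintegral _ _)
    rw [← ENNReal.ofReal_mul (by positivity)]
    apply ENNReal.ofReal_le_ofReal
    have hξ' : t / 2 * bracketWeight ξ ≤ ‖𝓕 b ξ‖ := hξ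
    have := pow_le_pow_left₀ (mul_nonneg (by positivity) (bracketWeight_pos ξ).le) hξ' 2
    calc bracketWeight ξ ^ 2 = 4 * (t ^ 2)⁻¹ * (t / 2 * bracketWeight ξ) ^ 2 := by
          field_simp; norm_num
      _ ≤ _ := by gcongr

theorem lintegral_rpow_mul_lintegral_indicator_lt {q : ℝ} (hq : 1 < q) {u : V → ℂ}
    (hu : Measurable u) :
    ∫⁻ t in Set.Ioi (0 : ℝ), ENNReal.ofReal (t ^ (q - 2)) *
        ∫⁻ x, ENNReal.ofReal ‖{x | t < ‖u x‖}.indicator u x‖ =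
      ENNReal.ofReal (q - 1)⁻¹ * ∫⁻ x, ENNReal.ofReal (‖u x‖ ^ q) := by
  have hms : MeasurableSet {z : ℝ × V | z.1 < ‖u z.2‖} :=
    measurableSet_lt measurable_fst (hu.comp measurable_snd).norm
  have hm : Measurable (fun z : ℝ × V ↦ ‖{z : ℝ × V | z.1 < ‖u z.2‖}.indicator (fun z ↦ u z.2) z‖) :=
    ((hu.comp measurable_snd).indicator hms).norm
  simp_rw [← lintegral_const_mul' _ _ ENNReal.ofReal_ne_top]
  rw [lintegral_lintegral_swap]
  · congr 1; ext x
    have : ∀ t : ℝ, ENNReal.ofReal (t ^ (q - 2)) *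
        ENNReal.ofReal ‖{x | t < ‖u x‖}.indicator u x‖ = (Set.Iio ‖u x‖).indicator
          (fun t ↦ ENNReal.ofReal ‖u x‖ * ENNReal.ofReal (t ^ (q - 2))) t := by
      intro t
      by_cases h : t < ‖u x‖ <;> simp [Set.indicator, h, mul_comm]
    simp_rw [this]
    rw [setLIntegral_indicator measurableSet_Iio, Set.inter_comm, Set.Ioi_inter_Iio,
      lintegral_const_mul' _ _ ENNReal.ofReal_ne_top, lintegral_Ioo_rpow (by linarith) (norm_nonneg _),
      ← ENNReal.ofReal_mul (norm_nonneg _), ← ENNReal.ofReal_mul (by simp; linarith)]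
    congr 1
    rcases (norm_nonneg (u x)).eq_or_lt with h | h
    · rw [← h]; simp [Real.zero_rpow (show q ≠ 0 by linarith)]
    · rw [show q - 2 + 1 = q - 1 by ring, Real.rpow_sub_one h.ne']
      field_simp
  · apply Measurable.aemeasurable
    exact (measurable_fst.pow_const _).ennreal_ofReal.mul hm.ennreal_ofReal

theorem lintegral_rpow_mul_lintegral_indicator_le {q : ℝ} (hq0 : 0 < q) (hq : q < 2) {u : V → ℂ}
    (hu : Measurable u) :
    ∫⁻ t in Set.Ioi (0 : ℝ), ENNReal.ofReal (t ^ (q - 3)) *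
        ∫⁻ x, ENNReal.ofReal (‖{x | ‖u x‖ ≤ t}.indicator u x‖ ^ 2) =
      ENNReal.ofReal (2 - q)⁻¹ * ∫⁻ x, ENNReal.ofReal (‖u x‖ ^ q) := by
  have hms : MeasurableSet {z : ℝ × V | ‖u z.2‖ ≤ z.1} :=
    measurableSet_le (hu.comp measurable_snd).norm measurable_fst
  have hm : Measurable (fun z : ℝ × V ↦
      ‖{z : ℝ × V | ‖u z.2‖ ≤ z.1}.indicator (fun z ↦ u z.2) z‖ ^ 2) :=
    ((hu.comp measurable_snd).indicator hms).norm.pow_const 2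
  simp_rw [← lintegral_const_mul' _ _ ENNReal.ofReal_ne_top]
  rw [lintegral_lintegral_swap]
  · congr 1; ext x
    have : ∀ t : ℝ, ENNReal.ofReal (t ^ (q - 3)) *
        ENNReal.ofReal (‖{x | ‖u x‖ ≤ t}.indicator u x‖ ^ 2) = (Set.Ici ‖u x‖).indicator
          (fun t ↦ ENNReal.ofReal (‖u x‖ ^ 2) * ENNReal.ofReal (t ^ (q - 3))) t := by
      intro t
      by_cases h : ‖u x‖ ≤ t <;> simp [Set.indicator, h, mul_comm]
    simp_rw [this]
    rw [setLIntegral_indicator measurableSet_Ici, lintegral_const_mul' _ _ ENNReal.ofReal_ne_top]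
    rcases (norm_nonneg (u x)).eq_or_lt with h | h
    · rw [← h]; simp [Real.zero_rpow hq0.ne']
    rw [Set.inter_eq_left.2 (Set.Ici_subset_Ioi.2 h), lintegral_Ici_rpow (by linarith) h,
      ← ENNReal.ofReal_mul (by positivity), ← ENNReal.ofReal_mul (by simp; linarith)]
    congr 1
    rw [show q - 3 + 1 = q - 2 by ring, Real.rpow_sub h, Real.rpow_two]
    have : q - 2 ≠ 0 := by linarith
    have : 2 - q ≠ 0 := by linarith
    field_simp
    ring
  · apply Measurable.aemeasurable
    exact (measurable_fst.pow_const _).ennreal_ofReal.mul hm.ennreal_ofReal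

/-- The Hardy–Littlewood–Paley inequality with the inhomogeneous weight `bracketWeight`. -/
theorem lintegral_norm_fourier_rpow_mul_bracketWeight_le (hV : 0 < Module.finrank ℝ V) {q : ℝ}
    (hq1 : 1 < q) (hq2 : q ≤ 2) :
    ∃ C : ℝ≥0∞, C ≠ ⊤ ∧ ∀ u : V → ℂ, Measurable u → Integrable u → MemLp u 2 volume →
      ∫⁻ ξ, ENNReal.ofReal (‖𝓕 u ξ‖ ^ q * bracketWeight ξ ^ (2 - q)) ≤
        C * ∫⁻ x, ENNReal.ofReal (‖u x‖ ^ q) := by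
  rcases hq2.eq_or_lt with rfl | hq2
  · refine ⟨1, by simp, fun u _ h1 h2 ↦ ?_⟩
    simpa using (lintegral_norm_fourier_sq h1 h2).le
  obtain ⟨K, hKt, hK⟩ := lintegral_bracketWeight_sq_lt hV
  refine ⟨ENNReal.ofReal q * (K * 2 * ENNReal.ofReal (q - 1)⁻¹ + 4 * ENNReal.ofReal (2 - q)⁻¹),
    by finiteness, fun u hm h1 h2 ↦ ?_⟩
  set ν : Measure V := volume.withDensity fun ξ ↦ ENNReal.ofReal (bracketWeight ξ ^ 2) with hν
  have hwm : Measurable fun ξ : V ↦ ENNReal.ofReal (bracketWeight ξ ^ 2) :=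
    (continuous_bracketWeight.pow 2).measurable.ennreal_ofReal
  have hFc : Continuous fun ξ : V ↦ ‖𝓕 u ξ‖ / bracketWeight ξ :=
    (continuous_fourier h1).norm.div continuous_bracketWeight fun ξ ↦ (bracketWeight_pos ξ).ne'
  have hpt : ∀ t ∈ Set.Ioi (0 : ℝ), ν {ξ | t < ‖𝓕 u ξ‖ / bracketWeight ξ} *
      ENNReal.ofReal (t ^ (q - 1)) ≤
      K * 2 * (ENNReal.ofReal (t ^ (q - 2)) *
        ∫⁻ x, ENNReal.ofReal ‖{x | t < ‖u x‖}.indicator u x‖) +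
      4 * (ENNReal.ofReal (t ^ (q - 3)) *
        ∫⁻ x, ENNReal.ofReal (‖{x | ‖u x‖ ≤ t}.indicator u x‖ ^ 2)) := by
    intro t ht
    have ht : 0 < t := ht
    have hms : MeasurableSet {x | t < ‖u x‖} := measurableSet_lt measurable_const hm.norm
    have hms' : MeasurableSet {x | ‖u x‖ ≤ t} := measurableSet_le hm.norm measurable_const
    have hsum : {x | t < ‖u x‖}.indicator u + {x | ‖u x‖ ≤ t}.indicator u = u := by
      have : {x | ‖u x‖ ≤ t} = {x | t < ‖u x‖}ᶜ := by ext; simp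
      rw [this, Set.indicator_self_add_compl]
    have h := lintegral_lt_norm_fourier_div_le hK (h1.indicator hms) (h1.indicator hms')
      (h2.indicator hms') ht
    rw [hsum] at h
    rw [hν, withDensity_apply _ (isOpen_lt continuous_const hFc).measurableSet]
    refine (mul_le_mul_left h _).trans_eq ?_
    rw [add_mul, ENNReal.ofReal_mul (by norm_num), ENNReal.ofReal_mul (by norm_num),
      show q - 2 = -1 + (q - 1) by ring, show q - 3 = -2 + (q - 1) by ring,
      Real.rpow_add ht, Real.rpow_add ht, ENNReal.ofReal_mul (by positivity),
      ENNReal.ofReal_mul (by positivity), Real.rpow_neg_one, Real.rpow_neg ht.le 2, Real.rpow_two,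
      ENNReal.ofReal_ofNat, ENNReal.ofReal_ofNat]
    ring
  calc ∫⁻ ξ, ENNReal.ofReal (‖𝓕 u ξ‖ ^ q * bracketWeight ξ ^ (2 - q))
      = ∫⁻ ξ, ENNReal.ofReal ((‖𝓕 u ξ‖ / bracketWeight ξ) ^ q) ∂ν := by
        rw [hν, lintegral_withDensity_eq_lintegral_mul₀ hwm.aemeasurable
          (hFc.measurable.pow_const q).ennreal_ofReal.aemeasurable]
        congr 1; ext ξ
        have hw := bracketWeight_pos ξ
        rw [Pi.mul_apply, ← ENNReal.ofReal_mul (by positivity),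
          Real.div_rpow (norm_nonneg _) hw.le, Real.rpow_sub hw, Real.rpow_two]
        congr 1; ring
    _ = ENNReal.ofReal q * ∫⁻ t in Set.Ioi 0, ν {ξ | t < ‖𝓕 u ξ‖ / bracketWeight ξ} *
          ENNReal.ofReal (t ^ (q - 1)) :=
        lintegral_rpow_eq_lintegral_meas_lt_mul ν
          (ae_of_all _ fun ξ ↦ div_nonneg (norm_nonneg _) (bracketWeight_pos ξ).le)
          hFc.measurable.aemeasurable (by linarith)
    _ ≤ ENNReal.ofReal q * ∫⁻ t in Set.Ioi (0 : ℝ), (K * 2 * (ENNReal.ofReal (t ^ (q - 2)) *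
          ∫⁻ x, ENNReal.ofReal ‖{x | t < ‖u x‖}.indicator u x‖) +
        4 * (ENNReal.ofReal (t ^ (q - 3)) *
          ∫⁻ x, ENNReal.ofReal (‖{x | ‖u x‖ ≤ t}.indicator u x‖ ^ 2))) := by
        exact mul_le_mul_right (setLIntegral_mono' measurableSet_Ioi hpt) _
    _ = _ := by
        have hmA : Measurable fun t : ℝ ↦ K * 2 * (ENNReal.ofReal (t ^ (q - 2)) *
            ∫⁻ x, ENNReal.ofReal ‖{x | t < ‖u x‖}.indicator u x‖) := by
          have hms : MeasurableSet {z : ℝ × V | z.1 < ‖u z.2‖} :=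
            measurableSet_lt measurable_fst (hm.comp measurable_snd).norm
          have hm' : Measurable (fun z : ℝ × V ↦
              ‖{z : ℝ × V | z.1 < ‖u z.2‖}.indicator (fun z ↦ u z.2) z‖) :=
            ((hm.comp measurable_snd).indicator hms).norm
          exact ((measurable_id.pow_const _).ennreal_ofReal.mul
            hm'.ennreal_ofReal.lintegral_prod_right').const_mul _
        rw [lintegral_add_left hmA, lintegral_const_mul' _ _ (by finiteness),
          lintegral_const_mul' _ _ (by norm_num), lintegral_rpow_mul_lintegral_indicator_lt hq1 hm,
          lintegral_rpow_mul_lintegral_indicator_le (by linarith) hq2 hm]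
        ring

end HardyLittlewoodPaley

section FourierLp

variable {V : Type*} [NormedAddCommGroup V] [InnerProductSpace ℝ V] [FiniteDimensional ℝ V]
  [MeasurableSpace V] [BorelSpace V]

theorem SchwartzMap.integrable_norm_rpow (f : 𝓢(V, ℂ)) {p : ℝ} (hp : 1 ≤ p) :
    Integrable fun x ↦ ‖f x‖ ^ p := by
  have h := (f.memLp (ENNReal.ofReal p) volume).integrable_norm_rpow (by simp; linarith)
    ENNReal.ofReal_ne_top
  rwa [ENNReal.toReal_ofReal (by linarith)] at h

/-- The Fourier transform maps `Lᵖ` with the dual Hardy–Littlewood–Paley weight to `Lᵖ`, `2 ≤ p`. -/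
theorem integral_norm_fourier_rpow_le (hV : 0 < Module.finrank ℝ V) {p : ℝ} (hp : 2 ≤ p) :
    ∃ C > (0 : ℝ), ∀ f g : 𝓢(V, ℂ), (∀ x, ‖g x‖ ≤ ‖f x‖ * bracketWeight x ^ (1 - 2 / p)) →
      (∫ ξ, ‖𝓕 (g : V → ℂ) ξ‖ ^ p) ^ (1 / p) ≤ C * (∫ x, ‖f x‖ ^ p) ^ (1 / p) := by
  have hp0 : 0 < p := by linarith
  set q := p / (p - 1) with hq
  have hpq : p.HolderConjugate q := Real.HolderConjugate.conjExponent (by linarith)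
  have hq0 : 0 < q := hpq.symm.pos
  have hq2 : q ≤ 2 := by rw [hq, div_le_iff₀ (by linarith)]; linarith
  obtain ⟨C, hCt, hC⟩ := lintegral_norm_fourier_rpow_mul_bracketWeight_le hV hpq.symm.lt hq2
  have hexp : (1 - 2 / p) * q = 2 - q := by
    have : p - 1 ≠ 0 := by linarith
    rw [hq]; field_simp; ring
  have hexp' : (p - 1) * q = p := by
    have : p - 1 ≠ 0 := by linarith
    rw [hq]; field_simp
  refine ⟨(C.toReal + 1) ^ (1 / q), by positivity, fun f g hfg ↦ ?_⟩
  set G : 𝓢(V, ℂ) := 𝓕 g with hG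
  have hGc : 𝓕 (g : V → ℂ) = G := SchwartzMap.fourier_coe g
  set u : V → ℂ := fun ξ ↦ ((‖G ξ‖ ^ (p - 2) : ℝ) : ℂ) * (starRingEnd ℂ) (G ξ) with hu
  have huc : Continuous u := (Complex.continuous_ofReal.comp
    (G.continuous.norm.rpow_const fun _ ↦ Or.inr (by linarith))).mul
    (Complex.continuous_conj.comp G.continuous)
  obtain ⟨M, hM⟩ : ∃ M : ℝ, ∀ ξ, ‖G ξ‖ ≤ M :=
    ⟨_, fun ξ ↦ G.toBoundedContinuousFunction.norm_coe_le_norm ξ⟩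
  have hun : ∀ ξ, ‖u ξ‖ = ‖G ξ‖ ^ (p - 1) := fun ξ ↦ by
    rw [hu]
    simp only [norm_mul, Complex.norm_real, RCLike.norm_conj]
    rw [Real.norm_of_nonneg (by positivity), ← Real.rpow_add_one' (norm_nonneg _) (by linarith)]
    congr 1; ring
  have hule : ∀ ξ, ‖u ξ‖ ≤ M ^ (p - 2) * ‖G ξ‖ := fun ξ ↦ by
    rw [hu]
    simp only [norm_mul, Complex.norm_real, RCLike.norm_conj]
    rw [Real.norm_of_nonneg (by positivity)]
    gcongr
    · exact hM ξ
  have hu1 : Integrable u := memLp_one_iff_integrable.1 <|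
    (G.memLp 1 volume).of_le_mul huc.aestronglyMeasurable (ae_of_all _ hule)
  have hu2 : MemLp u 2 volume :=
    (G.memLp 2 volume).of_le_mul huc.aestronglyMeasurable (ae_of_all _ hule)
  set A : ℝ := ∫ ξ, ‖G ξ‖ ^ p with hA
  set B : ℝ := ∫ x, ‖f x‖ ^ p with hB
  have hA0 : 0 ≤ A := by positivity
  have hB0 : 0 ≤ B := by positivity
  have hpair : (A : ℂ) = ∫ x, g x * 𝓕 u x := by
    rw [← integral_fourier_mul_eq g.integrable hu1, hA, ← integral_complex_ofReal]
    congr 1; ext ξ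
    rw [hGc, hu]
    have : ‖G ξ‖ ^ p = ‖G ξ‖ ^ (p - 2) * ‖G ξ‖ ^ 2 := by
      rw [← Real.rpow_two, ← Real.rpow_add' (norm_nonneg _) (by linarith)]
      congr 1; ring
    rw [this]
    push_cast
    rw [← Complex.mul_conj']
    ring
  have hG0 : ∀ x, 0 ≤ bracketWeight x ^ (1 - 2 / p) := fun x : V ↦
    Real.rpow_nonneg (bracketWeight_pos x).le _
  have hAle : ENNReal.ofReal A ≤ ENNReal.ofReal B ^ (1 / p) *
      (C * ENNReal.ofReal A) ^ (1 / q) := by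
    calc ENNReal.ofReal A = ‖∫ x, g x * 𝓕 u x‖ₑ := by
          rw [← hpair, ← ofReal_norm, Complex.norm_real, Real.norm_of_nonneg hA0]
      _ ≤ ∫⁻ x, ‖g x * 𝓕 u x‖ₑ := enorm_integral_le_lintegral_enorm _
      _ ≤ ∫⁻ x, ENNReal.ofReal ‖f x‖ *
            ENNReal.ofReal (‖𝓕 u x‖ * bracketWeight x ^ (1 - 2 / p)) := by
          refine lintegral_mono fun x ↦ ?_
          rw [← ofReal_norm, ← ENNReal.ofReal_mul (norm_nonneg _), norm_mul]
          apply ENNReal.ofReal_le_ofReal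
          calc ‖g x‖ * ‖𝓕 u x‖ ≤ (‖f x‖ * bracketWeight x ^ (1 - 2 / p)) * ‖𝓕 u x‖ :=
                mul_le_mul_of_nonneg_right (hfg x) (norm_nonneg _)
            _ = _ := by ring
      _ ≤ (∫⁻ x, ENNReal.ofReal ‖f x‖ ^ p) ^ (1 / p) *
          (∫⁻ x, ENNReal.ofReal (‖𝓕 u x‖ * bracketWeight x ^ (1 - 2 / p)) ^ q) ^ (1 / q) := by
          refine ENNReal.lintegral_mul_le_Lp_mul_Lq _ hpq
            f.continuous.norm.measurable.ennreal_ofReal.aemeasurable ?_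
          exact ((continuous_fourier hu1).norm.measurable.mul
            (continuous_bracketWeight.measurable.pow_const _)).ennreal_ofReal.aemeasurable
      _ ≤ _ := by
          gcongr
          · rw [hB, ofReal_integral_eq_lintegral_ofReal (f.integrable_norm_rpow (by linarith))
              (ae_of_all _ fun _ ↦ by positivity)]
            refine lintegral_mono fun x ↦ ?_
            rw [ENNReal.ofReal_rpow_of_nonneg (norm_nonneg _) hp0.le]
          · rw [hA, ofReal_integral_eq_lintegral_ofReal (G.integrable_norm_rpow (by linarith))
              (ae_of_all _ fun _ ↦ by positivity)]
            refine le_trans (le_of_eq ?_) ((hC u huc.measurable hu1 hu2).trans_eq ?_)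
            · congr 1; ext x
              rw [ENNReal.ofReal_rpow_of_nonneg (mul_nonneg (norm_nonneg _) (hG0 x)) hq0.le,
                Real.mul_rpow (norm_nonneg _) (hG0 x), ← Real.rpow_mul (bracketWeight_pos x).le,
                hexp]
            · congr 2; ext x
              rw [hun, ← Real.rpow_mul (norm_nonneg _), hexp']
  have hAle' : A ≤ B ^ (1 / p) * (C.toReal * A) ^ (1 / q) := by
    have h := ENNReal.toReal_mono (by finiteness) hAle
    rwa [ENNReal.toReal_mul, ← ENNReal.toReal_rpow, ← ENNReal.toReal_rpow, ENNReal.toReal_mul,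
      ENNReal.toReal_ofReal hA0, ENNReal.toReal_ofReal hB0] at h
  rw [hGc, ← hA]
  rcases hA0.eq_or_lt with h0 | h0
  · rw [← h0, Real.zero_rpow (by positivity)]; positivity
  have hsplit : A = A ^ (1 / p) * A ^ (1 / q) := by
    rw [← Real.rpow_add h0, one_div, one_div, hpq.inv_add_inv_eq_one, Real.rpow_one]
  have hpos : 0 < A ^ (1 / q) := by positivity
  refine le_of_mul_le_mul_right ?_ hpos
  calc A ^ (1 / p) * A ^ (1 / q) = A := hsplit.symm
    _ ≤ B ^ (1 / p) * (C.toReal * A) ^ (1 / q) := hAle'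
    _ = C.toReal ^ (1 / q) * B ^ (1 / p) * A ^ (1 / q) := by
      rw [Real.mul_rpow ENNReal.toReal_nonneg hA0]; ring
    _ ≤ _ := by
      gcongr
      linarith

end FourierLp

section Conventions

variable {d : ℕ}

theorem FT_eq_fourier (u : E d → ℂ) (ξ : E d) : FT d u ξ = 𝓕 u ((2 * π)⁻¹ • ξ) := by
  rw [Real.fourier_eq', FT]
  refine integral_congr_ae (ae_of_all _ fun x ↦ ?_)
  simp only [smul_eq_mul, inner_smul_right]
  congr 2
  push_cast
  field_simp

theorem FT_smul_eq_fourier (u : E d → ℂ) (η : E d) : FT d u ((2 * π) • η) = 𝓕 u η := by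
  rw [FT_eq_fourier, inv_smul_smul₀ (by positivity)]

theorem integral_comp_two_pi_smul {F : Type*} [NormedAddCommGroup F] [NormedSpace ℝ F]
    (u : E d → F) : ∫ η, u ((2 * π) • η) = ((2 * π) ^ d)⁻¹ • ∫ ξ, u ξ := by
  rw [Measure.integral_comp_smul, finrank_euclideanSpace_fin, abs_of_pos (by positivity)]

theorem integral_comp_inv_two_pi_smul {F : Type*} [NormedAddCommGroup F] [NormedSpace ℝ F]
    (u : E d → F) : ∫ ξ, u ((2 * π)⁻¹ • ξ) = (2 * π) ^ d • ∫ η, u η := by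
  rw [Measure.integral_comp_smul, finrank_euclideanSpace_fin, abs_of_pos (by positivity),
    inv_pow, inv_inv]

theorem FT_FT (f : 𝓢(E d, ℂ)) (ξ : E d) :
    FT d (FT d f) ξ = (2 * π : ℂ) ^ d * f (-ξ) := by
  have h : FT d (FT d f) ξ = (2 * π) ^ d • 𝓕⁻ (𝓕 (f : E d → ℂ)) (-ξ) := by
    rw [Real.fourierInv_eq', ← integral_comp_inv_two_pi_smul, FT]
    refine integral_congr_ae (ae_of_all _ fun x ↦ ?_)
    simp only [smul_eq_mul, inner_smul_left, inner_neg_right, FT_eq_fourier]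
    congr 2
    push_cast
    simp
    field_simp
  rw [h, ← SchwartzMap.fourier_coe, ← SchwartzMap.fourierInv_coe, FourierTransform.fourierInv_fourier_eq]
  simp

/-- The function `(1 + |x|²)^{k/2} f(x)`. -/
def bracketMul (k : ℝ) (f : 𝓢(E d, ℂ)) : 𝓢(E d, ℂ) :=
  SchwartzMap.smulLeftCLM ℂ (fun x : E d ↦ (1 + ‖x‖ ^ 2) ^ (k / 2)) f

theorem bracketMul_apply (k : ℝ) (f : 𝓢(E d, ℂ)) (x : E d) :
    bracketMul k f x = (((1 + ‖x‖ ^ 2) ^ (k / 2) : ℝ) : ℂ) * f x := by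
  rw [bracketMul, SchwartzMap.smulLeftCLM_apply_apply
    (Function.hasTemperateGrowth_one_add_norm_sq_rpow _ _), Complex.real_smul]

theorem bessel_FT (k : ℝ) (f : 𝓢(E d, ℂ)) (x : E d) :
    bessel d k (FT d f) x = FT d (bracketMul k f) x := by
  rw [bessel, FT, ← integral_neg_eq_self, ← integral_const_mul]
  refine integral_congr_ae (ae_of_all _ fun y ↦ ?_)
  simp only [FT_FT, bracketMul_apply, norm_neg, inner_neg_right, neg_neg, real_inner_comm y x]
  push_cast
  field_simp

theorem integral_norm_bessel_FT_rpow (k p : ℝ) (f : 𝓢(E d, ℂ)) :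
    ∫ x, ‖bessel d k (FT d f) x‖ ^ p =
      (2 * π) ^ d * ∫ η, ‖𝓕 (bracketMul k f : E d → ℂ) η‖ ^ p := by
  simp_rw [bessel_FT, FT_eq_fourier]
  exact integral_comp_inv_two_pi_smul fun η ↦ ‖𝓕 (bracketMul k f : E d → ℂ) η‖ ^ p

theorem hasTemperateGrowth_bracket_two_pi_smul (k : ℝ) :
    Function.HasTemperateGrowth fun η : E d ↦ (1 + ‖(2 * π) • η‖ ^ 2) ^ (k / 2) :=
  (Function.hasTemperateGrowth_one_add_norm_sq_rpow (E d) (k / 2)).comp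
    ((2 * π) • ContinuousLinearMap.id ℝ (E d)).hasTemperateGrowth

/-- The Bessel potential as an operator on Schwartz functions. -/
def besselSchwartz (k : ℝ) (f : 𝓢(E d, ℂ)) : 𝓢(E d, ℂ) :=
  SchwartzMap.fourierMultiplierCLM ℂ (fun η : E d ↦ (1 + ‖(2 * π) • η‖ ^ 2) ^ (k / 2)) f

theorem fourier_besselSchwartz (k : ℝ) (f : 𝓢(E d, ℂ)) (η : E d) :
    𝓕 (besselSchwartz k f : E d → ℂ) η =
      (((1 + ‖(2 * π) • η‖ ^ 2) ^ (k / 2) : ℝ) : ℂ) * 𝓕 (f : E d → ℂ) η := by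
  rw [← SchwartzMap.fourier_coe, besselSchwartz, SchwartzMap.fourierMultiplierCLM_apply,
    FourierTransform.fourier_fourierInv_eq,
    SchwartzMap.smulLeftCLM_apply_apply (hasTemperateGrowth_bracket_two_pi_smul k),
    Complex.real_smul]
  rfl

theorem bessel_eq_fourierInv (k : ℝ) (u : E d → ℂ) (x : E d) :
    bessel d k u x =
      𝓕⁻ (fun η ↦ (((1 + ‖(2 * π) • η‖ ^ 2) ^ (k / 2) : ℝ) : ℂ) * 𝓕 u η) x := by
  have h := integral_comp_two_pi_smul fun ξ : E d ↦
    Complex.exp (Complex.I * (⟪x, ξ⟫ : ℂ)) * (((1 + ‖ξ‖ ^ 2) ^ (k / 2) : ℝ) : ℂ) * FT d u ξ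
  rw [Real.fourierInv_eq', bessel, ← Complex.ofReal_inv, ← Complex.real_smul, ← h]
  refine integral_congr_ae (ae_of_all _ fun η ↦ ?_)
  simp only [FT_smul_eq_fourier, inner_smul_right, smul_eq_mul, real_inner_comm x η]
  rw [mul_assoc]
  congr 2
  push_cast
  ring

theorem bessel_eq_besselSchwartz (k : ℝ) (f : 𝓢(E d, ℂ)) :
    bessel d k f = besselSchwartz k f := by
  ext x
  simp_rw [bessel_eq_fourierInv, ← fourier_besselSchwartz]
  rw [← SchwartzMap.fourier_coe, ← SchwartzMap.fourierInv_coe,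
    FourierTransform.fourierInv_fourier_eq]

end Conventions

section BesselContraction

variable {V : Type*} [NormedAddCommGroup V] [InnerProductSpace ℝ V] [FiniteDimensional ℝ V]
  [MeasurableSpace V] [BorelSpace V]

theorem integral_exp_neg_mul_gammaMeasure {a s : ℝ} (ha : 0 < a) (hs : 0 ≤ s) :
    ∫ t, Real.exp (-(s * max t 0)) ∂(ProbabilityTheory.gammaMeasure a 1) = (1 + s) ^ (-a) := by
  have hm : Measurable (ProbabilityTheory.gammaPDF a 1) :=
    (ProbabilityTheory.measurable_gammaPDFReal a 1).ennreal_ofReal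
  rw [ProbabilityTheory.gammaMeasure, integral_withDensity_eq_integral_toReal_smul hm
    (ae_of_all _ fun _ ↦ ENNReal.ofReal_lt_top)]
  have h : ∀ t : ℝ, (ProbabilityTheory.gammaPDF a 1 t).toReal • Real.exp (-(s * max t 0)) =
      (Set.Ici 0).indicator
        (fun t : ℝ ↦ (Real.Gamma a)⁻¹ * (t ^ (a - 1) * Real.exp (-((1 + s) * t)))) t := fun t ↦ by
    rw [ProbabilityTheory.gammaPDF,
      ENNReal.toReal_ofReal (ProbabilityTheory.gammaPDFReal_nonneg ha one_pos t),
      ProbabilityTheory.gammaPDFReal]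
    by_cases ht : 0 ≤ t
    · rw [if_pos ht, Set.indicator_of_mem (Set.mem_Ici.2 ht), max_eq_left ht, add_mul, neg_add,
        Real.exp_add, Real.one_rpow, smul_eq_mul]
      ring
    · rw [if_neg ht, Set.indicator_of_notMem (by simpa using ht), zero_smul]
  simp_rw [h]
  rw [integral_indicator measurableSet_Ici, integral_Ici_eq_integral_Ioi, integral_const_mul,
    Real.integral_rpow_mul_exp_neg_mul_Ioi ha (by positivity), one_div,
    Real.inv_rpow (by positivity), Real.rpow_neg (by positivity)]
  have h : Real.Gamma a ≠ 0 := (Real.Gamma_pos_of_pos ha).ne'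
  field_simp [h]

/-- The negative powers of `1 + |ξ|²` are characteristic functions: they are mixtures of
Gaussians whose variance is Gamma distributed. -/
theorem exists_charFun_eq_one_add_norm_sq_rpow {a : ℝ} (ha : 0 < a) :
    ∃ μ : Measure V, IsProbabilityMeasure μ ∧
      ∀ ξ, charFun μ ξ = (((1 + ‖ξ‖ ^ 2) ^ (-a) : ℝ) : ℂ) := by
  have := ProbabilityTheory.isProbabilityMeasure_gammaMeasure ha one_pos
  set γ := ProbabilityTheory.gammaMeasure a 1
  have hm : Measurable fun z : ℝ × V ↦ √(2 * max z.1 0) • z.2 := by fun_prop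
  refine ⟨(γ.prod (ProbabilityTheory.stdGaussian V)).map fun z ↦ √(2 * max z.1 0) • z.2,
    Measure.isProbabilityMeasure_map hm.aemeasurable, fun ξ ↦ ?_⟩
  rw [charFun_apply, integral_map hm.aemeasurable (by fun_prop),
    integral_prod _ (Integrable.of_bound (by fun_prop) 1 (ae_of_all _ fun z ↦ ?_)),
    ← integral_exp_neg_mul_gammaMeasure ha (by positivity), ← integral_complex_ofReal]
  · congr 1; ext t
    have : ∫ y, cexp (⟪√(2 * max t 0) • y, ξ⟫ * I) ∂(ProbabilityTheory.stdGaussian V) =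
        charFun (ProbabilityTheory.stdGaussian V) (√(2 * max t 0) • ξ) := by
      simp_rw [charFun_apply, real_inner_smul_left, real_inner_smul_right]
    rw [this, ProbabilityTheory.charFun_stdGaussian, norm_smul, Real.norm_of_nonneg (by positivity)]
    have h2 : (√(2 * max t 0) * ‖ξ‖) ^ 2 = 2 * (‖ξ‖ ^ 2 * max t 0) := by
      rw [mul_pow, Real.sq_sqrt (by positivity)]; ring
    rw [← Complex.ofReal_pow, h2]
    push_cast
    congr 1
    ring
  · rw [Complex.norm_exp_ofReal_mul_I]

/-- Averaging translates of a function does not increase its `Lᵖ` norm. -/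
theorem integral_norm_rpow_le_of_eq_integral_add {p : ℝ} (hp : 1 ≤ p) (μ : Measure V)
    [IsProbabilityMeasure μ] (f h : 𝓢(V, ℂ)) (hf : ∀ x, f x = ∫ y, h (x + y) ∂μ) :
    ∫ x, ‖f x‖ ^ p ≤ ∫ x, ‖h x‖ ^ p := by
  have hp0 : 0 ≤ p := by linarith
  obtain ⟨M, hM⟩ : ∃ M : ℝ, ∀ x, ‖h x‖ ≤ M :=
    ⟨_, fun x ↦ h.toBoundedContinuousFunction.norm_coe_le_norm x⟩
  have hc : Continuous fun x ↦ ‖h x‖ ^ p := h.continuous.norm.rpow_const fun _ ↦ Or.inr hp0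
  have hcp : Continuous fun z : V × V ↦ ‖h (z.1 + z.2)‖ ^ p := hc.comp continuous_add
  have hint := h.integrable_norm_rpow hp
  have hprod : Integrable (fun z : V × V ↦ ‖h (z.1 + z.2)‖ ^ p) (volume.prod μ) := by
    rw [integrable_prod_iff' hcp.aestronglyMeasurable]
    refine ⟨ae_of_all _ fun y ↦ hint.comp_add_right y, ?_⟩
    have : ∀ y, ∫ x, ‖‖h (x + y)‖ ^ p‖ = ∫ x, ‖‖h x‖ ^ p‖ := fun y ↦
      integral_add_right_eq_self (fun x ↦ ‖‖h x‖ ^ p‖) y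
    simp_rw [this]
    exact integrable_const _
  calc ∫ x, ‖f x‖ ^ p ≤ ∫ x, ∫ y, ‖h (x + y)‖ ^ p ∂μ := by
        refine integral_mono (f.integrable_norm_rpow hp) hprod.integral_prod_left fun x ↦ ?_
        have hcx : Continuous fun y ↦ h (x + y) := h.continuous.comp (by fun_prop)
        have h1 : ‖f x‖ ≤ ∫ y, ‖h (x + y)‖ ∂μ := by
          rw [hf]; exact norm_integral_le_integral_norm _
        refine (Real.rpow_le_rpow (norm_nonneg _) h1 hp0).trans ?_
        refine (convexOn_rpow hp).map_integral_le (μ := μ) (f := fun y ↦ ‖h (x + y)‖)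
          (continuousOn_id.rpow_const fun _ _ ↦ Or.inr hp0) isClosed_Ici
          (ae_of_all _ fun y ↦ norm_nonneg _) ?_ ?_
        · exact Integrable.of_bound hcx.norm.aestronglyMeasurable M
            (ae_of_all _ fun y ↦ by rw [norm_norm]; exact hM _)
        · refine Integrable.of_bound
            (hcx.norm.rpow_const fun _ ↦ Or.inr hp0).aestronglyMeasurable (M ^ p)
            (ae_of_all _ fun y ↦ ?_)
          rw [Function.comp_apply, Real.norm_of_nonneg (by positivity)]
          exact Real.rpow_le_rpow (norm_nonneg _) (hM _) hp0
    _ = ∫ y, (∫ x, ‖h (x + y)‖ ^ p) ∂μ := integral_integral_swap hprod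
    _ = ∫ x, ‖h x‖ ^ p := by
        have : ∀ y, ∫ x, ‖h (x + y)‖ ^ p = ∫ x, ‖h x‖ ^ p := fun y ↦
          integral_add_right_eq_self (fun x ↦ ‖h x‖ ^ p) y
        simp [this]

theorem SchwartzMap.eq_integral_exp_mul_fourier (f : 𝓢(V, ℂ)) (x : V) :
    f x = ∫ η, cexp (↑(2 * π * ⟪η, x⟫) * I) * 𝓕 (f : V → ℂ) η := by
  have h : 𝓕⁻ (𝓕 f) = f := FourierTransform.fourierInv_fourier_eq f
  conv_lhs => rw [← h]
  rw [SchwartzMap.fourierInv_coe, SchwartzMap.fourier_coe, Real.fourierInv_eq']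
  simp

theorem eq_integral_add_of_fourier_eq_charFun_mul (μ : Measure V) [IsProbabilityMeasure μ]
    (f h : 𝓢(V, ℂ)) (hfh : ∀ η, 𝓕 (f : V → ℂ) η = charFun μ ((2 * π) • η) * 𝓕 (h : V → ℂ) η)
    (x : V) : f x = ∫ y, h (x + y) ∂μ := by
  set H : 𝓢(V, ℂ) := 𝓕 h with hH
  have hHc : 𝓕 (h : V → ℂ) = H := SchwartzMap.fourier_coe h
  have hprod : Integrable (fun z : V × V ↦ cexp (↑(2 * π * ⟪z.1, x + z.2⟫) * I) * H z.1)
      (volume.prod μ) := by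
    refine (H.integrable.comp_fst μ).bdd_mul (c := 1) (Continuous.aestronglyMeasurable (by fun_prop))
      (ae_of_all _ fun z ↦ ?_)
    rw [Complex.norm_exp_ofReal_mul_I]
  calc f x = ∫ η, ∫ y, cexp (↑(2 * π * ⟪η, x + y⟫) * I) * H η ∂μ := by
        rw [f.eq_integral_exp_mul_fourier x]
        congr 1; ext η
        rw [hfh, hHc, charFun_apply, integral_mul_const, ← mul_assoc, ← integral_const_mul]
        congr 2; ext y
        rw [← Complex.exp_add, inner_smul_right, inner_add_right, real_inner_comm η y]
        congr 1
        push_cast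
        ring
    _ = ∫ y, (∫ η, cexp (↑(2 * π * ⟪η, x + y⟫) * I) * H η) ∂μ := integral_integral_swap hprod
    _ = ∫ y, h (x + y) ∂μ := by simp_rw [h.eq_integral_exp_mul_fourier, hHc]

theorem integral_norm_rpow_le_besselSchwartz {d : ℕ} {k p : ℝ} (hk : 0 ≤ k) (hp : 1 ≤ p)
    (f : 𝓢(E d, ℂ)) : ∫ x, ‖f x‖ ^ p ≤ ∫ x, ‖besselSchwartz k f x‖ ^ p := by
  rcases hk.eq_or_lt with rfl | hk
  · have : besselSchwartz 0 f = f := by simp [besselSchwartz]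
    rw [this]
  · obtain ⟨μ, _, hμ⟩ := exists_charFun_eq_one_add_norm_sq_rpow (V := E d) (half_pos hk)
    refine integral_norm_rpow_le_of_eq_integral_add hp μ f _
      (eq_integral_add_of_fourier_eq_charFun_mul μ f _ fun η ↦ ?_)
    rw [hμ, fourier_besselSchwartz, ← mul_assoc, ← Complex.ofReal_mul,
      ← Real.rpow_add (by positivity), neg_add_cancel, Real.rpow_zero, Complex.ofReal_one, one_mul]

end BesselContraction

section Sufficiency

theorem exists_bound_of_nonneg_of_le {d : ℕ} (hd : 1 ≤ d) {p : ℝ} (hp : 2 ≤ p) {k₁ k₂ : ℝ}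
    (hk₁ : 0 ≤ k₁) (hk₂ : k₂ ≤ -(2 * d * (1 / 2 - 1 / p))) :
    ∃ C > (0 : ℝ), ∀ f : 𝓢(E d, ℂ),
      (∫ x, ‖bessel d k₂ (FT d f) x‖ ^ p) ^ (1 / p) ≤
        C * (∫ x, ‖bessel d k₁ f x‖ ^ p) ^ (1 / p) := by
  have hp0 : 0 < p := by linarith
  obtain ⟨C, hC, h⟩ := integral_norm_fourier_rpow_le (V := E d) (by rw [finrank_euclideanSpace_fin]; lia) hp
  refine ⟨((2 * π) ^ d) ^ (1 / p) * C, by positivity, fun f ↦ ?_⟩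
  rw [integral_norm_bessel_FT_rpow, bessel_eq_besselSchwartz,
    Real.mul_rpow (by positivity) (by positivity), mul_assoc]
  gcongr
  refine (h f (bracketMul k₂ f) fun x ↦ ?_).trans ?_
  · rw [bracketMul_apply, norm_mul, Complex.norm_real, Real.norm_of_nonneg (by positivity),
      mul_comm, bracketWeight, ← Real.rpow_mul (by positivity), finrank_euclideanSpace_fin]
    gcongr
    · exact le_add_of_nonneg_right (by positivity)
    · calc k₂ / 2 ≤ -(2 * d * (1 / 2 - 1 / p)) / 2 := by gcongr
        _ = -(d : ℝ) / 2 * (1 - 2 / p) := by ring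
  · exact mul_le_mul_of_nonneg_left (Real.rpow_le_rpow (by positivity)
      (integral_norm_rpow_le_besselSchwartz hk₁ (by linarith) f) (by positivity)) hC.le

end Sufficiency

section LpBound

variable {V : Type*} [NormedAddCommGroup V] [InnerProductSpace ℝ V] [FiniteDimensional ℝ V]
  [MeasurableSpace V] [BorelSpace V]

theorem SchwartzMap.norm_le_integral_norm_fourier (f : 𝓢(V, ℂ)) (x : V) :
    ‖f x‖ ≤ ∫ η, ‖𝓕 (f : V → ℂ) η‖ := by
  rw [f.eq_integral_exp_mul_fourier x]
  refine (norm_integral_le_integral_norm _).trans_eq ?_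
  simp_rw [norm_mul, Complex.norm_exp_ofReal_mul_I, one_mul]

/-- Interpolation between the trivial bound and the Plancherel theorem. -/
theorem SchwartzMap.integral_norm_rpow_le_fourier {p : ℝ} (hp : 2 ≤ p) (f : 𝓢(V, ℂ)) :
    ∫ x, ‖f x‖ ^ p ≤
      (∫ η, ‖𝓕 (f : V → ℂ) η‖) ^ (p - 2) * ∫ η, ‖𝓕 (f : V → ℂ) η‖ ^ 2 := by
  have h2 : Integrable fun x ↦ ‖f x‖ ^ 2 := by
    simpa using f.integrable_norm_rpow (p := 2) (by norm_num)
  rw [← SchwartzMap.fourier_coe, f.integral_norm_sq_fourier, SchwartzMap.fourier_coe,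
    ← integral_const_mul]
  refine integral_mono (f.integrable_norm_rpow (by linarith)) (h2.const_mul _) fun x ↦ ?_
  have : ‖f x‖ ^ p = ‖f x‖ ^ (p - 2) * ‖f x‖ ^ 2 := by
    rw [← Real.rpow_two, ← Real.rpow_add' (norm_nonneg _) (by linarith)]
    congr 1; ring
  dsimp only
  rw [this]
  gcongr
  · exact f.norm_le_integral_norm_fourier x

theorem SchwartzMap.integral_norm_fourier_rpow_pos {p : ℝ} (hp : 1 ≤ p) {f : 𝓢(V, ℂ)}
    (hf : f ≠ 0) : 0 < ∫ η, ‖𝓕 (f : V → ℂ) η‖ ^ p := by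
  set F : 𝓢(V, ℂ) := 𝓕 f with hF
  have hFc : 𝓕 (f : V → ℂ) = F := SchwartzMap.fourier_coe f
  obtain ⟨η, hη⟩ : ∃ η, F η ≠ 0 := by
    by_contra! h
    refine hf ?_
    ext x
    rw [f.eq_integral_exp_mul_fourier, hFc]
    simp [h]
  rw [hFc]
  refine integral_pos_of_integrable_nonneg_nonzero (x := η)
    (F.continuous.norm.rpow_const fun _ ↦ Or.inr (by linarith)) (F.integrable_norm_rpow hp) (fun _ ↦ by positivity) ?_
  positivity

/-- The exponential modulation `x ↦ exp(2πi x·a) f(x)`. -/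
def SchwartzMap.modulate (a : V) (f : 𝓢(V, ℂ)) : 𝓢(V, ℂ) :=
  𝓕⁻ ((𝓕 f).compSubConstCLM ℂ a)

theorem SchwartzMap.fourier_modulate (a : V) (f : 𝓢(V, ℂ)) (η : V) :
    𝓕 (f.modulate a : V → ℂ) η = 𝓕 (f : V → ℂ) (η - a) := by
  rw [← SchwartzMap.fourier_coe, modulate, FourierTransform.fourier_fourierInv_eq,
    SchwartzMap.compSubConstCLM_apply, SchwartzMap.fourier_coe]

theorem SchwartzMap.modulate_apply (a : V) (f : 𝓢(V, ℂ)) (x : V) :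
    f.modulate a x = cexp (↑(2 * π * ⟪a, x⟫) * I) * f x := by
  rw [SchwartzMap.eq_integral_exp_mul_fourier, f.eq_integral_exp_mul_fourier, ← integral_const_mul, ← integral_add_right_eq_self _ a]
  congr 1; ext η
  rw [fourier_modulate, add_sub_cancel_right, ← mul_assoc, ← Complex.exp_add, inner_add_left]
  congr 2
  push_cast
  ring

end LpBound

section OrderNonneg

variable {d : ℕ}

theorem bracketMul_modulate (k : ℝ) (a : E d) (f : 𝓢(E d, ℂ)) :
    bracketMul k (f.modulate a) = (bracketMul k f).modulate a := by
  ext x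
  rw [bracketMul_apply, SchwartzMap.modulate_apply, SchwartzMap.modulate_apply, bracketMul_apply]
  ring

theorem bracketMul_ne_zero (k : ℝ) {f : 𝓢(E d, ℂ)} (hf : f ≠ 0) : bracketMul k f ≠ 0 := by
  contrapose! hf
  ext x
  have h := bracketMul_apply k f x
  rw [hf, zero_apply, zero_eq_mul] at h
  exact h.resolve_left (by exact_mod_cast (by positivity : (1 + ‖x‖ ^ 2) ^ (k / 2) ≠ 0))

theorem exists_real_bump {c : E d} (b : ContDiffBump c) :
    ∃ f : 𝓢(E d, ℂ), ∀ x, f x = (b x : ℂ) :=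
  ⟨(b.hasCompactSupport.comp_left Complex.ofReal_zero).toSchwartzMap
    (Complex.ofRealCLM.contDiff.comp b.contDiff), fun _ ↦ rfl⟩

theorem exists_ne_zero : ∃ f : 𝓢(E d, ℂ), f ≠ 0 := by
  let b : ContDiffBump (0 : E d) := default
  obtain ⟨f, hf⟩ := exists_real_bump b
  refine ⟨f, fun h ↦ ?_⟩
  have h0 := hf 0
  rw [b.one_of_mem_closedBall (Metric.mem_closedBall_self b.rIn_pos.le), h] at h0
  simp at h0

/-- High frequency modulations of a function are small in Bessel potential spaces of
negative order. -/
theorem tendsto_integral_norm_besselSchwartz_modulate (hd : 1 ≤ d) {k p : ℝ} (hk : k < 0)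
    (hp : 2 ≤ p) (f : 𝓢(E d, ℂ)) :
    ∃ a : ℕ → E d, Filter.Tendsto (fun n ↦ ∫ x, ‖besselSchwartz k (f.modulate (a n)) x‖ ^ p)
      Filter.atTop (nhds 0) := by
  have : Nontrivial (E d) := Module.nontrivial_of_finrank_pos (R := ℝ) (by
    rw [finrank_euclideanSpace_fin]; lia)
  obtain ⟨e, he⟩ := exists_norm_eq (E d) zero_le_one
  set J : E d → ℝ := fun η ↦ (1 + ‖(2 * π) • η‖ ^ 2) ^ (k / 2) with hJ
  have hJc : Continuous J := by
    refine Continuous.rpow_const (by fun_prop) fun x ↦ Or.inl (by positivity)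
  have hJ0 : ∀ η, 0 ≤ J η := fun η ↦ by positivity
  have hJ1 : ∀ η, J η ≤ 1 := fun η ↦
    Real.rpow_le_one_of_one_le_of_nonpos (le_add_of_nonneg_right (by positivity)) (by linarith)
  have hJt : ∀ η, Filter.Tendsto (fun n : ℕ ↦ J (η + (n : ℝ) • e)) Filter.atTop (nhds 0) := by
    intro η
    have h1 : Filter.Tendsto (fun n : ℕ ↦ ‖η + (n : ℝ) • e‖) Filter.atTop Filter.atTop := by
      refine Filter.tendsto_atTop_mono (f := fun n : ℕ ↦ (n : ℝ) - ‖η‖) (fun n ↦ ?_)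
        (Filter.tendsto_atTop_add_const_right _ _ tendsto_natCast_atTop_atTop)
      have := norm_sub_le (η + (n : ℝ) • e) η
      rw [add_sub_cancel_left, norm_smul, he, Real.norm_natCast] at this
      linarith
    have h2 : Filter.Tendsto (fun t : ℝ ↦ (1 + (2 * π * t) ^ 2) ^ (k / 2)) Filter.atTop
        (nhds 0) := by
      have h3 : Filter.Tendsto (fun t : ℝ ↦ 1 + (2 * π * t) ^ 2) Filter.atTop Filter.atTop :=
        Filter.tendsto_atTop_add_const_left _ _ ((Filter.tendsto_pow_atTop two_ne_zero).comp
          (Filter.tendsto_id.const_mul_atTop (by positivity)))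
      have h4 := (tendsto_rpow_neg_atTop (y := -(k / 2)) (by linarith)).comp h3
      simpa using! h4
    refine (h2.comp h1).congr fun n ↦ ?_
    simp only [hJ, Function.comp_apply, norm_smul]
    rw [Real.norm_of_nonneg (by positivity : 0 ≤ 2 * π)]
  set F : 𝓢(E d, ℂ) := 𝓕 f with hF
  have hFc : 𝓕 (f : E d → ℂ) = F := SchwartzMap.fourier_coe f
  have hlim : ∀ m : ℕ, m ≠ 0 → Filter.Tendsto
      (fun n : ℕ ↦ ∫ η, ‖𝓕 (besselSchwartz k (f.modulate ((n : ℝ) • e)) : E d → ℂ) η‖ ^ m)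
      Filter.atTop (nhds 0) := by
    intro m hm
    have heq : ∀ n : ℕ,
        ∫ η, ‖𝓕 (besselSchwartz k (f.modulate ((n : ℝ) • e)) : E d → ℂ) η‖ ^ m =
          ∫ η, (J (η + (n : ℝ) • e) * ‖F η‖) ^ m := fun n ↦ by
      rw [← integral_add_right_eq_self _ ((n : ℝ) • e)]
      congr 1; ext η
      rw [fourier_besselSchwartz, SchwartzMap.fourier_modulate, add_sub_cancel_right, norm_mul,
        Complex.norm_real, Real.norm_of_nonneg (by positivity), hFc]
    simp_rw [heq]
    have hint : Integrable fun η ↦ ‖F η‖ ^ m := by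
      simpa using F.integrable_norm_rpow (p := m)
        (by exact_mod_cast Nat.one_le_iff_ne_zero.2 hm)
    have := tendsto_integral_of_dominated_convergence (F := fun (n : ℕ) η ↦
      (J (η + (n : ℝ) • e) * ‖F η‖) ^ m) (f := fun _ ↦ 0) (fun η ↦ ‖F η‖ ^ m)
      (fun n ↦ (((hJc.comp (by fun_prop)).mul F.continuous.norm).pow m).aestronglyMeasurable)
      hint (fun n ↦ ae_of_all _ fun η ↦ ?_) (ae_of_all _ fun η ↦ ?_)
    · simpa using this
    · have h0 := hJ0 (η + (n : ℝ) • e)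
      rw [Real.norm_of_nonneg (by positivity)]
      gcongr
      exact mul_le_of_le_one_left (norm_nonneg _) (hJ1 _)
    · simpa [hm] using ((hJt η).mul_const ‖F η‖).pow m
  refine ⟨fun n ↦ (n : ℝ) • e, ?_⟩
  have h1 := hlim 1 one_ne_zero
  simp only [pow_one] at h1
  have h12 := (h1.rpow_const (p := p - 2) (Or.inr (by linarith))).mul (hlim 2 two_ne_zero)
  rw [mul_zero] at h12
  exact squeeze_zero (fun n ↦ by positivity)
    (fun n ↦ SchwartzMap.integral_norm_rpow_le_fourier hp _) h12

theorem nonneg_of_bound (hd : 1 ≤ d) {p : ℝ} (hp : 2 ≤ p) {k₁ k₂ C : ℝ}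
    (h : ∀ f : 𝓢(E d, ℂ), (∫ x, ‖bessel d k₂ (FT d f) x‖ ^ p) ^ (1 / p) ≤
      C * (∫ x, ‖bessel d k₁ f x‖ ^ p) ^ (1 / p)) : 0 ≤ k₁ := by
  by_contra! hk
  obtain ⟨f, hf⟩ := exists_ne_zero (d := d)
  obtain ⟨a, ha⟩ := tendsto_integral_norm_besselSchwartz_modulate hd hk hp f
  have hA : ∀ n, ∫ x, ‖bessel d k₂ (FT d (f.modulate (a n))) x‖ ^ p =
      ∫ x, ‖bessel d k₂ (FT d f) x‖ ^ p := fun n ↦ by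
    rw [integral_norm_bessel_FT_rpow, integral_norm_bessel_FT_rpow, bracketMul_modulate]
    simp_rw [SchwartzMap.fourier_modulate]
    rw [integral_sub_right_eq_self (fun η ↦ ‖𝓕 (bracketMul k₂ f : E d → ℂ) η‖ ^ p)]
  have hpos : 0 < (∫ x, ‖bessel d k₂ (FT d f) x‖ ^ p) ^ (1 / p) := by
    rw [integral_norm_bessel_FT_rpow]
    have := SchwartzMap.integral_norm_fourier_rpow_pos (p := p) (by linarith)
      (bracketMul_ne_zero k₂ hf)
    positivity
  have hlim := (ha.rpow_const (p := 1 / p) (Or.inr (by positivity))).const_mul C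
  rw [Real.zero_rpow (by positivity), mul_zero] at hlim
  refine hpos.not_ge (ge_of_tendsto' hlim fun n ↦ ?_)
  rw [← hA n, ← bessel_eq_besselSchwartz]
  exact h _

end OrderNonneg

section DecayOrder

variable {d : ℕ}

/-- The dilation `x ↦ f(x / R)`. -/
def SchwartzMap.dilate (R : ℝ) (hR : 0 < R) (f : 𝓢(E d, ℂ)) : 𝓢(E d, ℂ) :=
  SchwartzMap.compCLMOfContinuousLinearEquiv ℂ
    (ContinuousLinearEquiv.smulLeft (Units.mk0 R⁻¹ (inv_ne_zero hR.ne'))) f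

theorem SchwartzMap.dilate_apply {R : ℝ} (hR : 0 < R) (f : 𝓢(E d, ℂ)) (x : E d) :
    f.dilate R hR x = f (R⁻¹ • x) := rfl

theorem integral_comp_inv_smul_eq {F : Type*} [NormedAddCommGroup F] [NormedSpace ℝ F]
    {R : ℝ} (hR : 0 < R) (u : E d → F) : ∫ x, u (R⁻¹ • x) = R ^ d • ∫ x, u x := by
  rw [Measure.integral_comp_smul, finrank_euclideanSpace_fin, abs_of_pos (by positivity),
    inv_pow, inv_inv]

theorem SchwartzMap.fourier_dilate {R : ℝ} (hR : 0 < R) (f : 𝓢(E d, ℂ)) (η : E d) :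
    𝓕 (f.dilate R hR : E d → ℂ) η = R ^ d * 𝓕 (f : E d → ℂ) (R • η) := by
  have h := integral_comp_inv_smul_eq hR fun y : E d ↦
    cexp (↑(-2 * π * ⟪y, R • η⟫) * I) • f y
  rw [Real.fourier_eq', Real.fourier_eq', ← Complex.ofReal_pow, ← Complex.real_smul, ← h]
  congr 1; ext x
  rw [dilate_apply, inner_smul_left, inner_smul_right]
  simp [hR.ne']

theorem integral_norm_fourier_besselSchwartz_dilate_le {k : ℝ} (hk : 0 ≤ k) {R : ℝ} (hR : 1 ≤ R)
    {m : ℕ} (hm : m ≠ 0) (f : 𝓢(E d, ℂ)) :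
    ∫ η, ‖𝓕 (besselSchwartz k (f.dilate R (by positivity)) : E d → ℂ) η‖ ^ m ≤
      (R ^ d) ^ (m - 1) * ∫ η, ‖𝓕 (besselSchwartz k f : E d → ℂ) η‖ ^ m := by
  have hR0 : 0 < R := by positivity
  have hint : ∀ g : 𝓢(E d, ℂ), Integrable fun η ↦ ‖𝓕 (g : E d → ℂ) η‖ ^ m := fun g ↦ by
    have h := (𝓕 g).integrable_norm_rpow (p := m) (by exact_mod_cast Nat.one_le_iff_ne_zero.2 hm)
    simp_rw [Real.rpow_natCast] at h
    exact h
  set B := besselSchwartz k f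
  have h1 : ∫ η, ‖𝓕 (besselSchwartz k (f.dilate R hR0) : E d → ℂ) η‖ ^ m ≤
      ∫ η, (R ^ d) ^ m * ‖𝓕 (B : E d → ℂ) (R • η)‖ ^ m := by
    refine integral_mono (hint _) (((hint B).comp_smul hR0.ne').const_mul _) fun η ↦ ?_
    dsimp only
    rw [fourier_besselSchwartz, fourier_besselSchwartz, SchwartzMap.fourier_dilate, ← mul_pow,
      norm_mul, norm_mul, norm_mul, Complex.norm_real, Complex.norm_real, ← Complex.ofReal_pow,
      Complex.norm_real, Real.norm_of_nonneg (by positivity), Real.norm_of_nonneg (by positivity),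
      Real.norm_of_nonneg (by positivity), mul_left_comm]
    gcongr
    rw [smul_comm, norm_smul R, Real.norm_of_nonneg hR0.le]
    exact le_mul_of_one_le_left (norm_nonneg _) hR
  refine h1.trans_eq ?_
  rw [integral_const_mul, Measure.integral_comp_smul volume (fun η ↦ ‖𝓕 (B : E d → ℂ) η‖ ^ m),
    finrank_euclideanSpace_fin, abs_of_pos (by positivity), smul_eq_mul, ← mul_assoc]
  congr 1
  obtain ⟨m, rfl⟩ := Nat.exists_eq_succ_of_ne_zero hm
  rw [Nat.succ_sub_one, pow_succ, mul_assoc, mul_inv_cancel₀ (by positivity), mul_one]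

/-- Dilations by `R ≥ 1` increase a Bessel potential norm of nonnegative order at most as they
increase the `Lᵖ` norm. -/
theorem exists_integral_norm_besselSchwartz_dilate_le {k : ℝ} (hk : 0 ≤ k) {p : ℝ} (hp : 2 ≤ p)
    (f : 𝓢(E d, ℂ)) : ∃ M ≥ (0 : ℝ), ∀ R (hR : 1 ≤ R),
      ∫ x, ‖besselSchwartz k (f.dilate R (by positivity)) x‖ ^ p ≤ M * R ^ d := by
  refine ⟨(∫ η, ‖𝓕 (besselSchwartz k f : E d → ℂ) η‖) ^ (p - 2) *
    ∫ η, ‖𝓕 (besselSchwartz k f : E d → ℂ) η‖ ^ 2, by positivity, fun R hR ↦ ?_⟩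
  have hone := integral_norm_fourier_besselSchwartz_dilate_le hk hR one_ne_zero f
  have htwo := integral_norm_fourier_besselSchwartz_dilate_le hk hR two_ne_zero f
  simp only [pow_one, Nat.sub_self, pow_zero, one_mul, Nat.add_one_sub_one] at hone htwo
  refine (SchwartzMap.integral_norm_rpow_le_fourier hp _).trans ?_
  rw [mul_assoc, mul_comm _ (R ^ d)]
  exact mul_le_mul (Real.rpow_le_rpow (by positivity) hone (by linarith)) htwo (by positivity)
    (by positivity)

theorem min_mul_rpow_le_one_add_norm_sq_rpow (k : ℝ) {R : ℝ} (hR : 1 ≤ R) {x : E d}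
    (h1 : R ≤ ‖x‖) (h3 : ‖x‖ ≤ 3 * R) :
    min 1 (10 ^ (k / 2)) * R ^ k ≤ (1 + ‖x‖ ^ 2) ^ (k / 2) := by
  have hR0 : 0 < R := by positivity
  have hw1 : 1 ≤ (1 + ‖x‖ ^ 2) / R ^ 2 := by
    rw [le_div_iff₀ (by positivity)]; nlinarith
  have hw2 : (1 + ‖x‖ ^ 2) / R ^ 2 ≤ 10 := by
    rw [div_le_iff₀ (by positivity)]; nlinarith [norm_nonneg x]
  have hRk : R ^ k = (R ^ 2) ^ (k / 2) := by
    rw [← Real.rpow_two, ← Real.rpow_mul hR0.le]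
    congr 1; ring
  have heq : (1 + ‖x‖ ^ 2) ^ (k / 2) = ((1 + ‖x‖ ^ 2) / R ^ 2) ^ (k / 2) * R ^ k := by
    rw [hRk, ← Real.mul_rpow (by positivity) (by positivity), div_mul_cancel₀ _ (by positivity)]
  rw [heq]
  gcongr
  rcases le_total 0 k with hk | hk
  · exact (min_le_left _ _).trans (Real.one_le_rpow hw1 (by linarith))
  · exact (min_le_right _ _).trans
      (Real.rpow_le_rpow_of_nonpos (by positivity) hw2 (by linarith))

theorem le_norm_fourier_bracketMul_dilate (k : ℝ) {c : E d} (hc : ‖c‖ = 2) {b : ContDiffBump c}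
    (hb : b.rOut = 1) {f : 𝓢(E d, ℂ)} (hf : ∀ x, f x = (b x : ℂ)) {R : ℝ} (hR : 1 ≤ R)
    {η : E d} (hη : ‖η‖ ≤ (2 * π * R)⁻¹) :
    Real.cos 1 * (min 1 (10 ^ (k / 2)) * ∫ x, b x) * (R ^ k * R ^ d) ≤
      ‖𝓕 (bracketMul k (f.dilate R (by positivity)) : E d → ℂ) η‖ := by
  have hR0 : 0 < R := by positivity
  set g := bracketMul k (f.dilate R hR0) with hg
  set G : E d → ℝ := fun x ↦ (1 + ‖x‖ ^ 2) ^ (k / 2) * b (R⁻¹ • x) with hG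
  have hG0 : ∀ x, 0 ≤ G x := fun x ↦ mul_nonneg (by positivity) b.nonneg
  have hgG : ∀ x, g x = (G x : ℂ) := fun x ↦ by
    rw [hg, bracketMul_apply, SchwartzMap.dilate_apply, hf, hG, Complex.ofReal_mul]
  have hGi : Integrable G := by
    refine g.integrable.re.congr (ae_of_all _ fun x ↦ ?_)
    simp [hgG]
  have hsupp : ∀ x, b (R⁻¹ • x) ≠ 0 → ‖x - R • c‖ ≤ R := fun x hx ↦ by
    have h1 : ‖R⁻¹ • x - c‖ ≤ 1 := by
      rw [← dist_eq_norm]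
      by_contra! h
      exact hx (b.zero_of_le_dist (by rw [hb]; exact h.le))
    have h2 : x - R • c = R • (R⁻¹ • x - c) := by rw [smul_sub, smul_inv_smul₀ hR0.ne']
    rw [h2, norm_smul, Real.norm_of_nonneg hR0.le]
    exact mul_le_of_le_one_right hR0.le h1
  have hcos : ∀ x, Real.cos 1 * G x ≤ Real.cos (2 * π * ⟪x - R • c, η⟫) * G x := fun x ↦ by
    by_cases hx : b (R⁻¹ • x) = 0
    · simp [hG, hx]
    · refine mul_le_mul_of_nonneg_right ?_ (hG0 x)
      rw [← Real.cos_abs (2 * π * _)]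
      refine Real.cos_le_cos_of_nonneg_of_le_pi (abs_nonneg _) (by linarith [Real.pi_gt_three]) ?_
      rw [abs_mul, abs_of_pos (by positivity : 0 < 2 * π)]
      calc 2 * π * |⟪x - R • c, η⟫| ≤ 2 * π * (R * (2 * π * R)⁻¹) := by
            gcongr
            exact (abs_real_inner_le_norm _ _).trans
              (mul_le_mul (hsupp x hx) hη (norm_nonneg _) hR0.le)
        _ = 1 := by field_simp
  have hweight : ∀ x, min 1 (10 ^ (k / 2)) * R ^ k * b (R⁻¹ • x) ≤ G x := fun x ↦ by
    by_cases hx : b (R⁻¹ • x) = 0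
    · simp [hG, hx]
    · have h0 := hsupp x hx
      have hcR : ‖R • c‖ = 2 * R := by
        rw [norm_smul, hc, Real.norm_of_nonneg hR0.le, mul_comm]
      have h1 := norm_sub_norm_le (R • c) x
      have h2 := norm_sub_norm_le x (R • c)
      rw [norm_sub_rev] at h1
      exact mul_le_mul_of_nonneg_right
        (min_mul_rpow_le_one_add_norm_sq_rpow k hR (by linarith) (by linarith)) b.nonneg
  have hbi : Integrable fun x ↦ b (R⁻¹ • x) :=
    (b.continuous.integrable_of_hasCompactSupport b.hasCompactSupport).comp_smul
      (inv_ne_zero hR0.ne')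
  have hre : (cexp (↑(2 * π * ⟪R • c, η⟫) * I) * 𝓕 (g : E d → ℂ) η).re =
      ∫ x, Real.cos (2 * π * ⟪x - R • c, η⟫) * G x := by
    have hi : Integrable fun x ↦ cexp (↑(-2 * π * ⟪x - R • c, η⟫) * I) * (G x : ℂ) := by
      refine hGi.ofReal.bdd_mul (c := 1) (Continuous.aestronglyMeasurable (by fun_prop))
        (ae_of_all _ fun x ↦ ?_)
      rw [Complex.norm_exp_ofReal_mul_I]
    have h : cexp (↑(2 * π * ⟪R • c, η⟫) * I) * 𝓕 (g : E d → ℂ) η =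
        ∫ x, cexp (↑(-2 * π * ⟪x - R • c, η⟫) * I) * (G x : ℂ) := by
      rw [Real.fourier_eq', ← integral_const_mul]
      congr 1; ext x
      rw [smul_eq_mul, hgG, ← mul_assoc, ← Complex.exp_add, inner_sub_left]
      congr 2
      push_cast
      ring
    rw [h, ← RCLike.re_eq_complex_re, ← integral_re hi]
    congr 1; ext x
    rw [RCLike.re_eq_complex_re, Complex.re_mul_ofReal, Complex.exp_ofReal_mul_I_re, neg_mul,
      neg_mul, Real.cos_neg]
  calc Real.cos 1 * (min 1 (10 ^ (k / 2)) * ∫ x, b x) * (R ^ k * R ^ d)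
      = Real.cos 1 * ∫ x, min 1 (10 ^ (k / 2)) * R ^ k * b (R⁻¹ • x) := by
        rw [integral_const_mul, integral_comp_inv_smul_eq hR0 (fun x ↦ b x), smul_eq_mul]
        ring
    _ ≤ Real.cos 1 * ∫ x, G x :=
        mul_le_mul_of_nonneg_left (integral_mono (hbi.const_mul _) hGi hweight)
          Real.cos_one_pos.le
    _ ≤ ∫ x, Real.cos (2 * π * ⟪x - R • c, η⟫) * G x := by
        rw [← integral_const_mul]
        refine integral_mono (hGi.const_mul _) ?_ hcos
        exact hGi.bdd_mul (c := 1) (Continuous.aestronglyMeasurable (by fun_prop))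
          (ae_of_all _ fun x ↦ Real.abs_cos_le_one _)
    _ ≤ ‖𝓕 (g : E d → ℂ) η‖ := by
        rw [← hre]
        refine (Complex.re_le_norm _).trans_eq ?_
        rw [norm_mul, Complex.norm_exp_ofReal_mul_I, one_mul]

theorem le_of_bound (hd : 1 ≤ d) {p : ℝ} (hp : 2 ≤ p) {k₁ k₂ C : ℝ} (hk₁ : 0 ≤ k₁)
    (hC : 0 < C) (h : ∀ f : 𝓢(E d, ℂ), (∫ x, ‖bessel d k₂ (FT d f) x‖ ^ p) ^ (1 / p) ≤
      C * (∫ x, ‖bessel d k₁ f x‖ ^ p) ^ (1 / p)) :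
    k₂ ≤ -(2 * d * (1 / 2 - 1 / p)) := by
  have hp0 : 0 < p := by linarith
  have : Nontrivial (E d) := Module.nontrivial_of_finrank_pos (R := ℝ) (by
    rw [finrank_euclideanSpace_fin]; lia)
  obtain ⟨c, hc⟩ := exists_norm_eq (E d) zero_le_two
  let b : ContDiffBump c := ⟨1 / 2, 1, by norm_num, by norm_num⟩
  obtain ⟨f, hf⟩ := exists_real_bump b
  obtain ⟨M, hM0, hM⟩ := exists_integral_norm_besselSchwartz_dilate_le hk₁ hp f
  set A : ℝ := Real.cos 1 * (min 1 (10 ^ (k₂ / 2)) * ∫ x, b x) with hA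
  have hA0 : 0 < A := by
    have := Real.cos_one_pos
    have := b.integral_pos (μ := volume)
    positivity
  set v : ℝ := volume.real (Metric.closedBall (0 : E d) (2 * π)⁻¹) with hv
  have hv0 : 0 < v := ENNReal.toReal_pos
    (Metric.measure_closedBall_pos volume _ (by positivity)).ne' measure_closedBall_lt_top.ne
  have hvol : ∀ R : ℝ, 0 < R →
      volume.real (Metric.closedBall (0 : E d) (2 * π * R)⁻¹) = (R ^ d)⁻¹ * v := fun R hR ↦ by
    rw [mul_inv_rev, measureReal_def, Measure.addHaar_closedBall_mul _ _ (by positivity) (by positivity),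
      finrank_euclideanSpace_fin, ENNReal.toReal_mul, ENNReal.toReal_ofReal (by positivity),
      inv_pow, hv, measureReal_def]
  have key : ∀ R : ℝ, 1 ≤ R →
      R ^ ((k₂ + d) * p - 2 * d) ≤ C ^ p * M / ((2 * π) ^ d * (A ^ p * v)) := by
    intro R hR
    have hR0 : 0 < R := by positivity
    have hlow : (A * (R ^ k₂ * R ^ d)) ^ p * ((R ^ d)⁻¹ * v) ≤
        ∫ η, ‖𝓕 (bracketMul k₂ (f.dilate R hR0) : E d → ℂ) η‖ ^ p := by
      have hint : Integrable
          fun η ↦ ‖𝓕 (bracketMul k₂ (f.dilate R hR0) : E d → ℂ) η‖ ^ p := by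
        simpa [SchwartzMap.fourier_coe] using
          (𝓕 (bracketMul k₂ (f.dilate R hR0))).integrable_norm_rpow (by linarith : 1 ≤ p)
      rw [← hvol R hR0]
      refine le_trans ?_ (setIntegral_le_integral hint (ae_of_all _ fun _ ↦ by positivity)
        (s := Metric.closedBall 0 (2 * π * R)⁻¹))
      refine setIntegral_ge_of_const_le_real measurableSet_closedBall
        measure_closedBall_lt_top.ne (fun η hη ↦ ?_) hint.integrableOn
      exact Real.rpow_le_rpow (by positivity) (le_norm_fourier_bracketMul_dilate k₂ hc rfl hf hR
        (by simpa using hη)) hp0.le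
    have hup := Real.rpow_le_rpow (by positivity) (h (f.dilate R hR0)) hp0.le
    rw [Real.mul_rpow hC.le (by positivity), ← Real.rpow_mul (by positivity),
      ← Real.rpow_mul (by positivity), one_div_mul_cancel hp0.ne', Real.rpow_one, Real.rpow_one,
      integral_norm_bessel_FT_rpow, bessel_eq_besselSchwartz] at hup
    have hall : (2 * π) ^ d * ((A * (R ^ k₂ * R ^ d)) ^ p * ((R ^ d)⁻¹ * v)) ≤
        C ^ p * (M * R ^ d) :=
      (mul_le_mul_of_nonneg_left hlow (by positivity)).trans
        (hup.trans (mul_le_mul_of_nonneg_left (hM R hR) (by positivity)))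
    have hpow : R ^ ((k₂ + d) * p - 2 * d) = (R ^ k₂ * R ^ d) ^ p * (R ^ d)⁻¹ * (R ^ d)⁻¹ := by
      rw [Real.rpow_sub hR0, Real.rpow_mul hR0.le, Real.rpow_add hR0, two_mul,
        Real.rpow_add hR0, Real.rpow_natCast]
      field_simp
    rw [le_div_iff₀ (by positivity), hpow]
    rw [Real.mul_rpow hA0.le (by positivity)] at hall
    calc (R ^ k₂ * R ^ d) ^ p * (R ^ d)⁻¹ * (R ^ d)⁻¹ * ((2 * π) ^ d * (A ^ p * v))
        = (2 * π) ^ d * (A ^ p * (R ^ k₂ * R ^ d) ^ p * ((R ^ d)⁻¹ * v)) * (R ^ d)⁻¹ := by ring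
      _ ≤ C ^ p * (M * R ^ d) * (R ^ d)⁻¹ := by gcongr
      _ = C ^ p * M := by field_simp
  have hexp : (k₂ + d) * p - 2 * d ≤ 0 := by
    by_contra! hpos
    obtain ⟨R, hR1, hR⟩ := ((Filter.eventually_ge_atTop 1).and
      ((tendsto_rpow_atTop hpos).eventually_gt_atTop _)).exists
    exact hR.not_ge (key R hR1)
  have hdiv : k₂ + d ≤ 2 * d / p := by rw [le_div_iff₀ hp0]; linarith
  calc k₂ ≤ 2 * d / p - d := by linarith
    _ = -(2 * d * (1 / 2 - 1 / p)) := by ring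

end DecayOrder

/-- for `2 ≤ p < ∞`, the Fourier transform is bounded from the Bessel
potential space `L^p_{k₁}(ℝ^d)` to `L^p_{k₂}(ℝ^d)` if and only if
`k₁ ≥ 0` and `k₂ ≤ -2d(1/2 - 1/p)`. -/
theorem stmt16 (d : ℕ) (hd : 1 ≤ d) (p : ℝ) (hp : 2 ≤ p) (k₁ k₂ : ℝ) :
    (∃ C > (0 : ℝ), ∀ f : SchwartzMap (E d) ℂ,
        (∫ x : E d, ‖bessel d k₂ (FT d (⇑f)) x‖ ^ p) ^ (1 / p) ≤
          C * (∫ x : E d, ‖bessel d k₁ (⇑f) x‖ ^ p) ^ (1 / p)) ↔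
      (0 ≤ k₁ ∧ k₂ ≤ -(2 * d * (1 / 2 - 1 / p))) := by
  constructor
  · rintro ⟨C, hC, h⟩
    have hk₁ := nonneg_of_bound hd hp h
    exact ⟨hk₁, le_of_bound hd hp hk₁ hC h⟩
  · rintro ⟨hk₁, hk₂⟩
    exact exists_bound_of_nonneg_of_le hd hp hk₁ hk₂
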